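/- Let M be an arbitrary von Neumann algebra (a unital *-subalgebra of the bounded operators on a complex Hilbert space that is equal to its double commutant). Then any 2-local derivation Δ : M → M is a derivation; in particular Δ is linear and satisfies Δ(xy) = Δ(x)y + xΔ(y) for all x, y ∈ M. -/

import Mathlib

/-- A derivation on an algebra: a `ℂ`-linear map `D` with
`D (x y) = D x · y + x · D y`. -/
def IsDerivationOn {R : Type*} [Ring R] [Algebra ℂ R] (D : R → R) : Prop :=
  IsLinearMap ℂ D ∧ ∀ x y : R, D (x * y) = D x * y + x * D y

/-- A 2-local derivation on an algebra: for every pair of points there is a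
derivation agreeing with `Δ` at both of them. -/
def Is2LocalDerivationOn {R : Type*} [Ring R] [Algebra ℂ R] (Δ : R → R) : Prop :=
  ∀ x y : R, ∃ D : R → R, IsDerivationOn D ∧ Δ x = D x ∧ Δ y = D y

section Ring

variable {R : Type*} [Ring R] [Algebra ℂ R]

namespace IsDerivationOn

variable {D E : R → R}

theorem map_add (hD : IsDerivationOn D) (x y : R) : D (x + y) = D x + D y := hD.1.map_add x y

theorem map_sub (hD : IsDerivationOn D) (x y : R) : D (x - y) = D x - D y := hD.1.map_sub x y

theorem map_zero (hD : IsDerivationOn D) : D 0 = 0 := hD.1.map_zero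

theorem map_smul (hD : IsDerivationOn D) (c : ℂ) (x : R) : D (c • x) = c • D x :=
  hD.1.map_smul c x

theorem map_mul (hD : IsDerivationOn D) (x y : R) : D (x * y) = D x * y + x * D y := hD.2 x y

theorem map_one (hD : IsDerivationOn D) : D 1 = 0 := by
  simpa using hD.map_mul 1 1

theorem sub (hD : IsDerivationOn D) (hE : IsDerivationOn E) :
    IsDerivationOn fun x => D x - E x := by
  refine ⟨⟨fun x y => ?_, fun c x => ?_⟩, fun x y => ?_⟩
  · rw [hD.map_add, hE.map_add]; abel
  · rw [hD.map_smul, hE.map_smul, smul_sub]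
  · simp only [hD.map_mul, hE.map_mul]; noncomm_ring

/-- A derivation maps the center into the center. -/
theorem commute_map (hD : IsDerivationOn D) {c : R} (hc : ∀ x, c * x = x * c) (x : R) :
    D c * x = x * D c := by
  have h := congrArg D (hc x)
  rw [hD.map_mul, hD.map_mul] at h
  linear_combination (norm := noncomm_ring) h - hc (D x)

/-- If a derivation kills an idempotent, it commutes with compression to the corner. -/
theorem map_corner (hD : IsDerivationOn D) {e : R} (h : D e = 0) (x : R) :
    D (e * x * e) = e * D x * e := by
  simp [hD.map_mul, h]

theorem mul_map_mul_self (hD : IsDerivationOn D) {e : R} (he : e * e = e) :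
    e * D e * e = 0 := by
  have h := congrArg D he
  rw [hD.map_mul] at h
  have h' : e * (D e * e + e * D e) * e = e * D e * e := by rw [h]
  have h1 : e * (D e * e + e * D e) * e = e * D e * (e * e) + (e * e) * D e * e := by noncomm_ring
  rw [h1, he] at h'
  simpa using h'

end IsDerivationOn

namespace Is2LocalDerivationOn

variable {Δ : R → R}

theorem sub_derivation (hΔ : Is2LocalDerivationOn Δ) {E : R → R} (hE : IsDerivationOn E) :
    Is2LocalDerivationOn fun x => Δ x - E x := by
  intro x y
  obtain ⟨D, hD, hx, hy⟩ := hΔ x y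
  exact ⟨_, hD.sub hE, by simp [hx], by simp [hy]⟩

theorem map_zero (hΔ : Is2LocalDerivationOn Δ) : Δ 0 = 0 := by
  obtain ⟨D, hD, h, -⟩ := hΔ 0 0
  rw [h, hD.map_zero]

theorem map_smul (hΔ : Is2LocalDerivationOn Δ) (c : ℂ) (x : R) : Δ (c • x) = c • Δ x := by
  obtain ⟨D, hD, h₁, h₂⟩ := hΔ (c • x) x
  rw [h₁, h₂, hD.map_smul]

theorem map_sq (hΔ : Is2LocalDerivationOn Δ) (x : R) : Δ (x * x) = Δ x * x + x * Δ x := by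
  obtain ⟨D, hD, h₁, h₂⟩ := hΔ (x * x) x
  rw [h₁, h₂, hD.map_mul]

theorem map_one_sub (hΔ : Is2LocalDerivationOn Δ) (x : R) : Δ (1 - x) = -Δ x := by
  obtain ⟨D, hD, h₁, h₂⟩ := hΔ (1 - x) x
  rw [h₁, h₂, hD.map_sub, hD.map_one, zero_sub]

/-- If `Δ` kills `e` and `w` commutes with `e`, then `Δ w` commutes with `e`. -/
theorem commute_of_map_eq_zero (hΔ : Is2LocalDerivationOn Δ) {e w : R} (he : Δ e = 0)
    (hw : e * w = w * e) : e * Δ w = Δ w * e := by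
  obtain ⟨D, hD, h₁, h₂⟩ := hΔ e w
  rw [h₁] at he
  have h := congrArg D hw
  rw [hD.map_mul, hD.map_mul, he] at h
  rw [h₂]
  simpa using h

end Is2LocalDerivationOn

omit [Algebra ℂ R] in
theorem eq_zero_of_corners_eq_zero {e x : R} (h₁ : e * x * e = 0) (h₂ : e * x * (1 - e) = 0)
    (h₃ : (1 - e) * x * e = 0) (h₄ : (1 - e) * x * (1 - e) = 0) : x = 0 := by
  linear_combination (norm := noncomm_ring) h₁ + h₂ + h₃ + h₄

end Ring

section BanachAlgebra

variable {A : Type*} [NormedRing A] [NormedAlgebra ℂ A] [CompleteSpace A] {Δ : A → A}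

theorem exists_isUnit_sub_smul_one (x : A) : ∃ c : ℂ, c ≠ 0 ∧ IsUnit (x - c • (1 : A)) := by
  obtain ⟨c, hc0, hc⟩ : ∃ c : ℂ, c ≠ 0 ∧ c ∉ spectrum ℂ x := by
    by_contra! h
    obtain ⟨n, hn⟩ := exists_nat_gt (‖x‖ * ‖(1 : A)‖)
    have := spectrum.norm_le_norm_mul_of_mem (h (n : ℂ) ?_)
    · simp at this
      linarith
    · rintro hn0
      rw [Nat.cast_eq_zero] at hn0
      rw [hn0, Nat.cast_zero] at hn
      exact hn.not_ge (by positivity)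
  refine ⟨c, hc0, ?_⟩
  rw [spectrum.notMem_iff, Algebra.algebraMap_eq_smul_one] at hc
  simpa using hc.neg

namespace Is2LocalDerivationOn

/-- The corner of `Δ x` at an idempotent killed by `Δ` depends only on the corner of `x`. -/
theorem corner_congr (hΔ : Is2LocalDerivationOn Δ) {e : A} (he : e * e = e) (hΔe : Δ e = 0)
    {x y : A} (hxy : e * x * e = e * y * e) : e * Δ x * e = e * Δ y * e := by
  obtain ⟨c, -, hc⟩ := exists_isUnit_sub_smul_one (e * x * e)
  set f := 1 - e with hf
  have hef : e * f = 0 := by rw [hf, mul_sub, he, mul_one, sub_self]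
  have hfe : f * e = 0 := by rw [hf, sub_mul, he, one_mul, sub_self]
  have hff : f * f = f := by nth_rw 1 [hf]; rw [sub_mul, hef, one_mul, sub_zero]
  set w := e * x * e + c • f with hw
  have hew : e * w = e * x * e := by
    rw [hw, mul_add, mul_smul_comm, hef, smul_zero, add_zero, ← mul_assoc, ← mul_assoc, he]
  have hwe : w * e = e * x * e := by
    rw [hw, add_mul, smul_mul_assoc, hfe, smul_zero, add_zero, mul_assoc, he]
  have hfw : f * w = c • f := by
    rw [hw, mul_add, mul_smul_comm, hff, ← mul_assoc, ← mul_assoc, hfe]; simp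
  have hwf : w * f = c • f := by
    rw [hw, add_mul, smul_mul_assoc, hff, mul_assoc, hef]; simp
  have hcomm : e * Δ w = Δ w * e := hΔ.commute_of_map_eq_zero hΔe (hew.trans hwe.symm)
  suffices key : ∀ z, e * z * e = e * x * e → e * Δ z * e = e * Δ w * e from
    (key x rfl).trans (key y hxy.symm).symm
  intro z hz
  obtain ⟨D, hD, h₁, h₂⟩ := hΔ z w
  have hDw : w * D e = D e * w := by
    have h := congrArg D (hew.trans hwe.symm)
    rw [hD.map_mul, hD.map_mul, ← h₂, hcomm] at h
    linear_combination (norm := noncomm_ring) -h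
  have hee := hD.mul_map_mul_self he
  have hff' : f * D e * f = 0 := by
    have h := hD.mul_map_mul_self hff
    rwa [hf, hD.map_sub, hD.map_one, ← hf, zero_sub, mul_neg, neg_mul, neg_eq_zero] at h
  have hef' : e * D e * f = 0 := by
    apply hc.mul_right_eq_zero.1
    have h : e * (w * D e) * f = e * (D e * w) * f := by rw [hDw]
    rw [← mul_assoc, hew] at h
    have h' : e * (D e * w) * f = c • (e * D e * f) := by
      rw [mul_assoc, mul_assoc, hwf]; simp [mul_assoc]
    rw [h'] at h
    have h3 : e * x * e * (e * D e * f) = e * x * (e * e) * D e * f := by noncomm_ring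
    rw [sub_mul, h3, he, h, smul_one_mul, sub_self]
  have hfe' : f * D e * e = 0 := by
    apply hc.mul_left_eq_zero.1
    have h : f * (w * D e) * e = f * (D e * w) * e := by rw [hDw]
    have h' : f * (D e * w) * e = f * D e * (e * x * e) := by rw [← hwe]; noncomm_ring
    rw [← mul_assoc, hfw, h'] at h
    have h3 : f * D e * e * (e * x * e) = f * D e * (e * e * x * e) := by noncomm_ring
    rw [mul_sub, h3, he, ← h, mul_smul_one]; simp
  have hDe : D e = 0 := eq_zero_of_corners_eq_zero hee hef' hfe' hff'
  rw [h₁, h₂, ← hD.map_corner hDe, ← hD.map_corner hDe, hz, hew, mul_assoc (e * x), he]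

theorem mul_defect_mul_eq_zero_of_isUnit (hΔ : Is2LocalDerivationOn Δ) {e n m : A}
    (he : e * e = e) (hen : e * n = n) (hne : n * e = 0) (hem : e * m = 0) (hme : m * e = m)
    (hu : IsUnit (1 + n * m)) (x y : A) : n * (Δ (x + y) - Δ x - Δ y) * m = 0 := by
  obtain ⟨u, hu⟩ := hu
  set v : A := ↑u⁻¹
  have huv : (1 + n * m) * v = 1 := by rw [← hu]; exact u.mul_inv
  have hvu : v * (1 + n * m) = 1 := by rw [← hu]; exact u.inv_mul
  have hrc : (e + n) * (e + m) = e * (1 + n * m) := by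
    linear_combination (norm := noncomm_ring) he + hem + hne - hen * m
  have hrc' : (e + n) * (e + m) = (1 + n * m) * e := by
    linear_combination (norm := noncomm_ring) he + hem + hne - n * hme
  set q := (e + m) * v * (e + n) with hq
  have hrq : (e + n) * q = e + n := by
    have : (e + n) * q = (e + n) * (e + m) * (v * (e + n)) := by rw [hq]; noncomm_ring
    rw [this, hrc, mul_assoc, ← mul_assoc _ v, huv, one_mul, mul_add, he, hen]
  have hqc : q * (e + m) = e + m := by
    have : q * (e + m) = (e + m) * v * ((e + n) * (e + m)) := by rw [hq]; noncomm_ring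
    rw [this, hrc', mul_assoc, ← mul_assoc v, hvu, one_mul, add_mul, he, hme]
  have hqq : q * q = q := by
    nth_rw 1 [hq]; rw [mul_assoc, hrq]
  obtain ⟨D, hD, hDe, hDq⟩ := hΔ e q
  have hΓ := hΔ.sub_derivation hD
  set Γ : A → A := fun x => Δ x - D x with hΓdef
  have hΓe : Γ e = 0 := sub_eq_zero.2 hDe
  have hΓq : Γ q = 0 := sub_eq_zero.2 hDq
  have hΓf : Γ (1 - e) = 0 := by rw [hΓ.map_one_sub, hΓe, neg_zero]
  have hff : (1 - e) * (1 - e) = 1 - e := by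
    linear_combination (norm := noncomm_ring) he
  have hnf : n * (1 - e) = n := by rw [mul_sub, hne, mul_one, sub_zero]
  have hfm : (1 - e) * m = m := by rw [sub_mul, hem, one_mul, sub_zero]
  have hcorner : ∀ a b, (1 - e) * a * (1 - e) = (1 - e) * b * (1 - e) →
      n * Γ a * m = n * Γ b * m := by
    intro a b hab
    have h := hΓ.corner_congr hff hΓf hab
    have h' : n * ((1 - e) * Γ a * (1 - e)) * m = n * ((1 - e) * Γ b * (1 - e)) * m := by rw [h]
    have key : ∀ z, n * ((1 - e) * z * (1 - e)) * m = n * z * m := fun z => by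
      rw [← mul_assoc, ← mul_assoc, hnf, mul_assoc _ (1 - e), hfm]
    rwa [key, key] at h'
  have hqcongr : ∀ a b, (e + n) * a * (e + m) = (e + n) * b * (e + m) →
      (e + n) * Γ a * (e + m) = (e + n) * Γ b * (e + m) := by
    intro a b hab
    have h := hΓ.corner_congr (x := a) (y := b) hqq hΓq (by
      have key : ∀ z, q * z * q = (e + m) * v * ((e + n) * z * (e + m)) * (v * (e + n)) :=
        fun z => by rw [hq]; noncomm_ring
      rw [key, key, hab])
    have h' : (e + n) * (q * Γ a * q) * (e + m) = (e + n) * (q * Γ b * q) * (e + m) := by rw [h]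
    have key : ∀ z, (e + n) * (q * z * q) * (e + m) = (e + n) * z * (e + m) := fun z => by
      have : (e + n) * (q * z * q) * (e + m) = (e + n) * q * z * (q * (e + m)) := by
        noncomm_ring
      rw [this, hrq, hqc]
    rwa [key, key] at h'
  have hdiag : ∀ a b, e * a = a → a * e = a → e * b = 0 → b * e = 0 →
      (e + n) * (a + b) * (e + m) = a + n * b * m ∧
      (e + n) * Γ (a + b) * (e + m) = e * Γ a * e + n * Γ b * m := by
    intro a b hea hae heb hbe
    have hna : n * a = 0 := by rw [← hea, ← mul_assoc, hne, zero_mul]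
    have ham : a * m = 0 := by rw [← hae, mul_assoc, hem, mul_zero]
    constructor
    · linear_combination (norm := noncomm_ring)
        hea * (e + m) + hae + ham + heb * (e + m) + hna * (e + m) + n * hbe
    · have hc := hΓ.commute_of_map_eq_zero (w := a + b) hΓe (by
        rw [mul_add, add_mul, hea, hae, heb, hbe])
      have h1 := hΓ.corner_congr (x := a + b) (y := a) he hΓe (by
        rw [mul_add, heb, add_zero])
      have h2 := hcorner (a + b) b (by
        have : (1 - e) * a = 0 := by rw [sub_mul, hea, one_mul, sub_self]
        rw [mul_add, this, zero_add])
      linear_combination (norm := noncomm_ring) h1 + h2 + hc * m + Γ (a + b) * hem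
        - n * hc + hne * Γ (a + b)
  have hK : ∀ a b a' b', e * a = a → a * e = a → e * b = 0 → b * e = 0 →
      e * a' = a' → a' * e = a' → e * b' = 0 → b' * e = 0 →
      a + n * b * m = a' + n * b' * m →
      e * Γ a * e + n * Γ b * m = e * Γ a' * e + n * Γ b' * m := by
    intro a b a' b' h1 h2 h3 h4 h1' h2' h3' h4' h
    obtain ⟨p1, p2⟩ := hdiag a b h1 h2 h3 h4
    obtain ⟨p1', p2'⟩ := hdiag a' b' h1' h2' h3' h4'
    rw [← p2, ← p2']
    exact hqcongr _ _ (by rw [p1, p1', h])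
  have hef : e * (1 - e) = 0 := by rw [mul_sub, he, mul_one, sub_self]
  have hfe : (1 - e) * e = 0 := by rw [sub_mul, he, one_mul, sub_self]
  have hl : ∀ z, e * ((1 - e) * z * (1 - e)) = 0 := fun z => by
    rw [← mul_assoc, ← mul_assoc, hef, zero_mul, zero_mul]
  have hr : ∀ z, (1 - e) * z * (1 - e) * e = 0 := fun z => by rw [mul_assoc, hfe, mul_zero]
  have hl' : ∀ z, e * (n * z * m) = n * z * m := fun z => by rw [← mul_assoc, ← mul_assoc, hen]
  have hr' : ∀ z, n * z * m * e = n * z * m := fun z => by rw [mul_assoc, hme]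
  have hfix : ∀ z, n * Γ ((1 - e) * z * (1 - e)) * m = n * Γ z * m := fun z =>
    hcorner _ _ (by
      linear_combination (norm := noncomm_ring) hff * z * (1 - e) + (1 - e) * (1 - e) * z * hff)
  have k1 := hK 0 ((1 - e) * (x + y) * (1 - e)) (n * ((1 - e) * x * (1 - e)) * m)
    ((1 - e) * y * (1 - e)) (mul_zero e) (zero_mul e) (hl _) (hr _) (hl' _) (hr' _) (hl _) (hr _)
    (by noncomm_ring)
  have k2 := hK (n * ((1 - e) * x * (1 - e)) * m) 0 0 ((1 - e) * x * (1 - e)) (hl' _) (hr' _)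
    (mul_zero e) (zero_mul e) (mul_zero e) (zero_mul e) (hl _) (hr _) (by noncomm_ring)
  rw [hfix, hfix] at k1
  rw [hfix] at k2
  have hdefect : Δ (x + y) - Δ x - Δ y = Γ (x + y) - Γ x - Γ y := by
    simp only [hΓdef, hD.map_add]; abel
  rw [hdefect]
  rw [hΓ.map_zero] at k1 k2
  linear_combination (norm := noncomm_ring) k1 + k2

theorem mul_defect_mul_eq_zero (hΔ : Is2LocalDerivationOn Δ) {e n m : A}
    (he : e * e = e) (hen : e * n = n) (hne : n * e = 0) (hem : e * m = 0) (hme : m * e = m)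
    (x y : A) : n * (Δ (x + y) - Δ x - Δ y) * m = 0 := by
  obtain ⟨c, hc0, hc⟩ := exists_isUnit_sub_smul_one (n * m)
  have hunit : IsUnit (1 + ((-c⁻¹) • n) * m) := by
    have h : 1 + ((-c⁻¹) • n) * m = (-c⁻¹) • (n * m - c • (1 : A)) := by
      rw [smul_sub, smul_smul, smul_mul_assoc, neg_mul, inv_mul_cancel₀ hc0]
      simp [add_comm]
    rw [h]
    exact hc.smul (Units.mk0 (-c⁻¹) (by simpa using hc0))
  have h := hΔ.mul_defect_mul_eq_zero_of_isUnit (n := (-c⁻¹) • n) he (by rw [mul_smul_comm, hen])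
    (by rw [smul_mul_assoc, hne, smul_zero]) hem hme hunit x y
  rw [smul_mul_assoc, smul_mul_assoc, smul_eq_zero] at h
  exact h.resolve_left (by simpa using hc0)

theorem corner_defect_eq_zero (hΔ : Is2LocalDerivationOn Δ) {e : A} (he : e * e = e)
    (x y a b : A) : (1 - e) * a * e * (Δ (x + y) - Δ x - Δ y) * (e * b * (1 - e)) = 0 := by
  have hef : e * (1 - e) = 0 := by rw [mul_sub, he, mul_one, sub_self]
  have hfe : (1 - e) * e = 0 := by rw [sub_mul, he, one_mul, sub_self]
  have hff : (1 - e) * (1 - e) = 1 - e := by rw [mul_sub, hfe, mul_one, sub_zero]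
  refine hΔ.mul_defect_mul_eq_zero (e := 1 - e) hff ?_ ?_ ?_ ?_ x y
  · rw [← mul_assoc, ← mul_assoc, hff]
  · rw [mul_assoc, hef, mul_zero]
  · rw [← mul_assoc, ← mul_assoc, hfe, zero_mul, zero_mul]
  · rw [mul_assoc, hff]

end Is2LocalDerivationOn

end BanachAlgebra

section CStarAlgebra

variable {A : Type*} [CStarAlgebra A]

theorem eq_zero_of_mul_star_mul_self_eq_zero {x : A} (h : x * star x * x = 0) : x = 0 := by
  have h' : star (star x * x) * (star x * x) = 0 := by
    rw [star_mul, star_star, mul_assoc, ← mul_assoc x, h, mul_zero]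
  exact CStarRing.star_mul_self_eq_zero_iff x |>.1 (CStarRing.star_mul_self_eq_zero_iff _ |>.1 h')

section Compression

variable {d : A} (hd : ∀ e : A, e * e = e → ∀ a b, (1 - e) * a * e * d * (e * b * (1 - e)) = 0)

include hd

theorem corner_mul_offDiagonal_eq_zero {e : A} (he : e * e = e) (b : A) :
    e * d * (e * b * (1 - e)) = 0 := by
  set X := e * d * (e * b * (1 - e)) with hX
  have hXf : X * (1 - e) = X := by
    have hff : (1 - e) * (1 - e) = 1 - e := by linear_combination (norm := noncomm_ring) he
    rw [hX, mul_assoc, mul_assoc (e * b), hff]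
  apply eq_zero_of_mul_star_mul_self_eq_zero
  calc X * star X * X = X * (1 - e) * star X * X := by rw [hXf]
    _ = X * ((1 - e) * star X * e * d * (e * b * (1 - e))) := by
        nth_rw 3 [hX]; noncomm_ring
    _ = 0 := by rw [hd e he, mul_zero]

theorem offDiagonal_eq_zero {p : A} (hp : IsStarProjection p) : (1 - p) * d * p = 0 := by
  have hpp : p * p = p := hp.isIdempotentElem
  have hsp : star p = p := hp.isSelfAdjoint
  have key : ∀ a b, p * a * (1 - p) * d * (p * b * (1 - p)) = 0 := by
    intro a b
    set n := p * a * (1 - p) with hn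
    set B := p * b * (1 - p) with hB
    have hfp : (1 - p) * p = 0 := by rw [sub_mul, hpp, one_mul, sub_self]
    have hff : (1 - p) * (1 - p) = 1 - p := by rw [mul_sub, hfp, mul_one, sub_zero]
    have hpn : p * n = n := by rw [hn, ← mul_assoc, ← mul_assoc, hpp]
    have hpB : p * B = B := by rw [hB, ← mul_assoc, ← mul_assoc, hpp]
    have hnp : n * p = 0 := by rw [hn, mul_assoc, hfp, mul_zero]
    have hBp : B * p = 0 := by rw [hB, mul_assoc, hfp, mul_zero]
    have hBn : B * n = 0 := by rw [← hpn, ← mul_assoc, hBp, zero_mul]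
    have hnB : n * B = 0 := by rw [← hpB, ← mul_assoc, hnp, zero_mul]
    have hnn : n * n = 0 := by nth_rw 2 [← hpn]; rw [← mul_assoc, hnp, zero_mul]
    have h1 := corner_mul_offDiagonal_eq_zero hd hpp B
    have h2 := corner_mul_offDiagonal_eq_zero hd (e := p + n)
      (by linear_combination (norm := noncomm_ring) hpp + hpn + hnp + hnn) B
    have e1 : p * B * (1 - p) = B := by rw [hpB, mul_sub, hBp, mul_one, sub_zero]
    have e2 : (p + n) * B * (1 - (p + n)) = B := by
      rw [add_mul, hpB, hnB, add_zero, mul_sub, mul_add, hBp, hBn]; simp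
    rw [e1] at h1
    rw [e2] at h2
    linear_combination (norm := noncomm_ring) h2 - h1
  rw [← star_eq_zero]
  apply eq_zero_of_mul_star_mul_self_eq_zero
  have h := key (star d) (star d)
  have hX : star ((1 - p) * d * p) = p * star d * (1 - p) := by
    simp [hsp, mul_assoc]
  have hff : (1 - p) * (1 - p) = 1 - p := by
    linear_combination (norm := noncomm_ring) hpp
  rw [star_star, hX]
  calc _ = p * star d * ((1 - p) * (1 - p)) * d * (p * p * star d * (1 - p)) := by noncomm_ring
    _ = 0 := by rw [hff, hpp, h]

theorem commute_starProjection {p : A} (hp : IsStarProjection p) : p * d = d * p := by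
  have h1 := offDiagonal_eq_zero hd hp
  have h2 := offDiagonal_eq_zero hd hp.one_sub
  linear_combination (norm := noncomm_ring) h2 - h1

theorem mul_commutator_starProjection_eq_zero {p : A} (hp : IsStarProjection p) (b : A) :
    d * (p * b - b * p) = 0 := by
  have hc := commute_starProjection hd hp
  have hpp : p * p = p := hp.isIdempotentElem
  have hff : (1 - p) * (1 - p) = 1 - p := hp.one_sub.isIdempotentElem
  have h1 := corner_mul_offDiagonal_eq_zero hd hpp b
  have h2 := corner_mul_offDiagonal_eq_zero hd hff b
  have h1' : d * (p * b * (1 - p)) = 0 := by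
    linear_combination (norm := noncomm_ring) h1 - hc * (p * b * (1 - p)) - d * hpp * b * (1 - p)
  have h2' : d * ((1 - p) * b * p) = 0 := by
    linear_combination (norm := noncomm_ring)
      h2 + hc * ((1 - p) * b * p) - d * hff * b * p
  linear_combination (norm := noncomm_ring) h1' - h2'

end Compression

/-- Every derivation of a commutative C⋆-algebra is zero. -/
theorem IsDerivationOn.eq_zero {Z : Type*} [CommCStarAlgebra Z] {D : Z → Z}
    (hD : IsDerivationOn D) (x : Z) : D x = 0 := by
  let _ := CStarAlgebra.spectralOrder Z
  let _ := CStarAlgebra.spectralOrderedRing Z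
  suffices hsa : ∀ h : Z, IsSelfAdjoint h → D h = 0 by
    rw [← realPart_add_I_smul_imaginaryPart x, hD.map_add, hD.map_smul,
      hsa _ (realPart x).2, hsa _ (imaginaryPart x).2]
    simp
  intro h hh
  apply (gelfandTransform_isometry Z).injective
  ext φ
  rw [_root_.map_zero]
  change φ (D h) = 0
  have hpos : ∀ a : Z, 0 ≤ a → φ a = 0 → φ (D a) = 0 := by
    intro a ha hφ
    have hs := CFC.sqrt_mul_sqrt_self a ha
    have h0 : φ (CFC.sqrt a) = 0 := by
      rw [← hs, _root_.map_mul] at hφ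
      exact mul_self_eq_zero.1 hφ
    rw [← hs, hD.map_mul, _root_.map_add, _root_.map_mul, _root_.map_mul, h0]
    simp
  set u := h - algebraMap ℂ Z (φ h) with hu
  have hφu : φ u = 0 := by rw [hu, _root_.map_sub, AlgHomClass.commutes]; simp
  have hDu : D u = D h := by
    rw [hu, hD.map_sub, Algebra.algebraMap_eq_smul_one, hD.map_smul, hD.map_one]; simp
  have hφh : star (φ h) = φ h := by rw [← map_star, hh.star_eq]
  have husa : IsSelfAdjoint u := hh.sub (by
    rw [isSelfAdjoint_iff, ← algebraMap_star_comm, hφh])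
  have hsub := CFC.posPart_sub_negPart u husa
  have hmul := congrArg φ (CFC.posPart_mul_negPart u)
  have hdiff := congrArg φ hsub
  rw [_root_.map_sub, hφu, sub_eq_zero] at hdiff
  rw [_root_.map_mul, _root_.map_zero, hdiff] at hmul
  have hneg := mul_self_eq_zero.1 hmul
  rw [← hDu, ← hsub, hD.map_sub, _root_.map_sub,
    hpos _ (CFC.posPart_nonneg u) (hdiff.trans hneg), hpos _ (CFC.negPart_nonneg u) hneg, sub_zero]

/-- Every derivation of a C⋆-algebra vanishes on the center. -/
theorem IsDerivationOn.eq_zero_of_central {D : A → A} (hD : IsDerivationOn D) {c : A}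
    (hc : ∀ x, c * x = x * c) : D c = 0 := by
  let S := StarSubalgebra.centralizer ℂ (Set.univ : Set A)
  have hmem : ∀ z, z ∈ S ↔ ∀ x, z * x = x * z := fun z => by
    rw [StarSubalgebra.mem_centralizer_iff]
    exact ⟨fun h x => (h x trivial).1.symm, fun h x _ => ⟨(h x).symm, (h _).symm⟩⟩
  have hclosed : IsClosed (S : Set A) := by
    rw [StarSubalgebra.coe_centralizer]; exact Set.isClosed_centralizer _
  let _ : CStarAlgebra S := StarSubalgebra.cstarAlgebra S
  let _ : CommCStarAlgebra S :=
    { (inferInstance : CStarAlgebra S) with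
      mul_comm := fun x y => Subtype.ext ((hmem x).1 x.2 y) }
  let E : S → S := fun z => ⟨D z, (hmem _).2 (hD.commute_map ((hmem _).1 z.2))⟩
  have hE : IsDerivationOn E :=
    ⟨⟨fun x y => Subtype.ext (hD.map_add x y), fun r x => Subtype.ext (hD.map_smul r x)⟩,
      fun x y => Subtype.ext (hD.map_mul x y)⟩
  exact congrArg Subtype.val (hE.eq_zero ⟨c, (hmem c).2 hc⟩)

/-- A central element annihilating all commutators annihilates the range of every derivation. -/
theorem IsDerivationOn.mul_eq_zero {D : A → A} (hD : IsDerivationOn D) {d : A}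
    (hc : ∀ x, d * x = x * d) (hcomm : ∀ x y, d * (x * y - y * x) = 0) (a : A) :
    d * D a = 0 := by
  have hda : ∀ x, d * a * x = x * (d * a) := fun x => by
    linear_combination (norm := noncomm_ring) hcomm a x + hc x * a
  have h := hD.eq_zero_of_central hda
  rwa [hD.map_mul, hD.eq_zero_of_central hc, zero_mul, zero_add] at h

theorem eq_zero_of_central_of_mul_self_eq_zero {d : A} (hc : ∀ x, d * x = x * d)
    (h : d * d = 0) : d = 0 := by
  apply eq_zero_of_mul_star_mul_self_eq_zero
  rw [mul_assoc, ← hc, ← mul_assoc, h, zero_mul]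

/-- If every element has a range projection, the star projections span a dense subspace. -/
theorem mem_of_starProjection_mem
    (hA : ∀ k : A, ∃ r : A, IsStarProjection r ∧ r * k = k ∧ ∀ y, y * k = 0 → y * r = 0)
    (S : Submodule ℂ A) (hS : IsClosed (S : Set A)) (hproj : ∀ p, IsStarProjection p → p ∈ S)
    (a : A) : a ∈ S := by
  let _ := CStarAlgebra.spectralOrder A
  let _ := CStarAlgebra.spectralOrderedRing A
  have step : ∀ h : A, 0 ≤ h → h ≤ 1 →
      ∃ r, IsStarProjection r ∧ 0 ≤ (2 : ℂ) • h - r ∧ (2 : ℂ) • h - r ≤ 1 := by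
    intro h h0 h1
    set u := (2 : ℂ) • h - 1 with hu
    have h2 : (2 : ℂ) • h = h + h := two_smul ℂ h
    have husa : IsSelfAdjoint u := by
      rw [hu, h2]
      exact ((IsSelfAdjoint.of_nonneg h0).add (.of_nonneg h0)).sub (.one A)
    have hu1 : u ≤ 1 := by
      rw [hu, h2, sub_le_iff_le_add]; exact add_le_add h1 h1
    have hu2 : -1 ≤ u := by
      rw [hu, h2, neg_le_sub_iff_le_add]; simpa using add_nonneg h0 h0
    obtain ⟨r, hr, hrk, hann⟩ := hA (u⁺)
    have hsub := CFC.posPart_sub_negPart u husa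
    have hneg : u⁻ * r = 0 := hann _ (CFC.negPart_mul_posPart u)
    have hrs : star r = r := hr.isSelfAdjoint
    have hrr : r * r = r := hr.isIdempotentElem
    have hneg' : r * u⁻ = 0 := by
      have := congrArg star hneg
      rwa [star_mul, hrs, (IsSelfAdjoint.of_nonneg (CFC.negPart_nonneg u)).star_eq,
        star_zero] at this
    have hrk' : u⁺ * r = u⁺ := by
      have := congrArg star hrk
      rwa [star_mul, hrs, (IsSelfAdjoint.of_nonneg (CFC.posPart_nonneg u)).star_eq] at this
    have hp : r * (u⁺ - u⁻) * r = u⁺ := by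
      rw [mul_sub, hrk, hneg', sub_zero, hrk']
    have hm : (1 - r) * (u⁺ - u⁻) * (1 - r) = -u⁻ := by
      linear_combination (norm := noncomm_ring) -hrk + hrk * r + hneg' + hneg - hneg' * r
    rw [hsub] at hp hm
    have hf : IsStarProjection (1 - r) := hr.one_sub
    have k1 : u⁺ ≤ r := by
      have := hr.isSelfAdjoint.conjugate_le_conjugate hu1
      rwa [hp, mul_one, hrr] at this
    have k2 : u⁻ ≤ 1 - r := by
      have := hf.isSelfAdjoint.conjugate_le_conjugate hu2
      rw [hm] at this
      have e : (1 - r) * -1 * (1 - r) = -(1 - r) := by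
        linear_combination (norm := noncomm_ring) -hrr
      rw [e] at this
      exact neg_le_neg_iff.1 this
    have e : (2 : ℂ) • h - r = u⁺ - u⁻ + (1 - r) := by rw [hsub, hu]; abel
    refine ⟨r, hr, ?_, ?_⟩
    · rw [e, sub_add_eq_add_sub, add_sub_assoc]
      exact add_nonneg (CFC.posPart_nonneg u) (sub_nonneg.2 k2)
    · rw [e]
      calc u⁺ - u⁻ + (1 - r) ≤ r - 0 + (1 - r) := by
            gcongr
            exact CFC.negPart_nonneg u
        _ = 1 := by abel
  have approx : ∀ n : ℕ, ∀ h : A, 0 ≤ h → h ≤ 1 → ∃ s ∈ S, ‖h - s‖ ≤ (1 / 2 : ℝ) ^ n := by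
    intro n
    induction n with
    | zero =>
      intro h h0 h1
      refine ⟨0, S.zero_mem, ?_⟩
      simpa using (CStarAlgebra.norm_le_one_iff_of_nonneg h h0).2 h1
    | succ n ih =>
      intro h h0 h1
      obtain ⟨r, hr, hr0, hr1⟩ := step h h0 h1
      obtain ⟨s, hs, hle⟩ := ih _ hr0 hr1
      refine ⟨(1 / 2 : ℂ) • (r + s), S.smul_mem _ (S.add_mem (hproj r hr) hs), ?_⟩
      have e : h - (1 / 2 : ℂ) • (r + s) = (1 / 2 : ℂ) • ((2 : ℂ) • h - r - s) := by
        rw [sub_sub, smul_sub, smul_smul]; norm_num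
      rw [e, norm_smul, pow_succ']
      gcongr
      norm_num
  have hunit : ∀ h : A, 0 ≤ h → h ≤ 1 → h ∈ S := by
    intro h h0 h1
    rw [← SetLike.mem_coe, ← hS.closure_eq, Metric.mem_closure_iff]
    intro ε hε
    obtain ⟨n, hn⟩ := exists_pow_lt_of_lt_one hε (by norm_num : (1 / 2 : ℝ) < 1)
    obtain ⟨s, hs, hle⟩ := approx n h h0 h1
    exact ⟨s, hs, by rw [dist_eq_norm]; exact hle.trans_lt hn⟩
  have hspan := CStarAlgebra.span_nonneg_inter_unitClosedBall (A := A)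
  have : (⊤ : Submodule ℂ A) ≤ S := by
    rw [← hspan, Submodule.span_le]
    rintro h ⟨h0, h1⟩
    exact hunit h h0 ((CStarAlgebra.norm_le_one_iff_of_nonneg h h0).1 (by simpa using h1))
  exact this trivial

variable (hproj : ∀ S : Submodule ℂ A, IsClosed (S : Set A) →
  (∀ p, IsStarProjection p → p ∈ S) → ∀ a, a ∈ S)

include hproj in
/-- An identity between continuous linear maps holds everywhere once it holds on star
projections. -/
theorem ContinuousLinearMap.eq_zero_of_starProjection (f : A →L[ℂ] A)
    (hf : ∀ p, IsStarProjection p → f p = 0) (a : A) : f a = 0 :=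
  hproj (LinearMap.ker (f : A →ₗ[ℂ] A)) f.isClosed_ker hf a

include hproj in
theorem commute_of_commute_starProjection {d : A}
    (hd : ∀ p, IsStarProjection p → p * d = d * p) (a : A) : d * a = a * d := by
  have h := ContinuousLinearMap.eq_zero_of_starProjection hproj
    (ContinuousLinearMap.mul ℂ A d - (ContinuousLinearMap.mul ℂ A).flip d)
    (fun p hp => by simp [hd p hp]) a
  simpa [sub_eq_zero] using h

include hproj in
theorem mul_commutator_eq_zero_of_starProjection {d : A}
    (hd : ∀ p, IsStarProjection p → ∀ b, d * (p * b - b * p) = 0) (a b : A) :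
    d * (a * b - b * a) = 0 := by
  have h := ContinuousLinearMap.eq_zero_of_starProjection hproj
    (ContinuousLinearMap.mul ℂ A d ∘L
      ((ContinuousLinearMap.mul ℂ A).flip b - ContinuousLinearMap.mul ℂ A b))
    (fun p hp => by simpa [mul_sub] using hd p hp b) a
  simpa [mul_sub] using h

namespace Is2LocalDerivationOn

variable {Δ : A → A}

/-- A central linear combination of values of `Δ` that annihilates commutators vanishes. -/
theorem mul_map_eq_zero (hΔ : Is2LocalDerivationOn Δ) {d : A}
    (hc : ∀ x, d * x = x * d) (hcomm : ∀ x y, d * (x * y - y * x) = 0) (a : A) :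
    d * Δ a = 0 := by
  obtain ⟨D, hD, h, -⟩ := hΔ a a
  rw [h, hD.mul_eq_zero hc hcomm]

include hproj in
theorem map_add (hΔ : Is2LocalDerivationOn Δ) (x y : A) : Δ (x + y) = Δ x + Δ y := by
  set d := Δ (x + y) - Δ x - Δ y with hd
  have hcorner : ∀ e : A, e * e = e → ∀ a b, (1 - e) * a * e * d * (e * b * (1 - e)) = 0 :=
    fun e he a b => hΔ.corner_defect_eq_zero he x y a b
  have hc := commute_of_commute_starProjection hproj
    fun p hp => commute_starProjection hcorner hp
  have hcomm := mul_commutator_eq_zero_of_starProjection hproj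
    fun p hp => mul_commutator_starProjection_eq_zero hcorner hp
  have hd0 : d = 0 := eq_zero_of_central_of_mul_self_eq_zero hc (by
    nth_rw 2 [hd]
    rw [mul_sub, mul_sub]
    simp [hΔ.mul_map_eq_zero hc hcomm])
  rwa [hd, sub_sub, sub_eq_zero] at hd0

/-- An additive 2-local derivation satisfies the Leibniz rule whenever the left factor is
idempotent. -/
theorem map_idempotent_mul (hΔ : Is2LocalDerivationOn Δ) (hadd : ∀ x y, Δ (x + y) = Δ x + Δ y)
    {p : A} (hp : p * p = p) (x : A) : Δ (p * x) = Δ p * x + p * Δ x := by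
  obtain ⟨D, hD, hDp, -⟩ := hΔ p p
  have hΓ := hΔ.sub_derivation hD
  set Γ : A → A := fun x => Δ x - D x with hΓdef
  have hΓp : Γ p = 0 := sub_eq_zero.2 hDp
  have hΓadd : ∀ x y, Γ (x + y) = Γ x + Γ y := fun x y => by
    simp only [hΓdef, hadd, hD.map_add]; abel
  have hmul : ∀ z, Γ (p * z) = p * Γ (p * z) := fun z => by
    obtain ⟨E, hE, h₁, h₂⟩ := hΓ (p * z) p
    have h := hE.map_mul p (p * z)
    rwa [← h₂, hΓp, zero_mul, zero_add, ← mul_assoc, hp, ← h₁] at h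
  have hmul' : ∀ z, p * Γ ((1 - p) * z) = 0 := fun z => by
    obtain ⟨E, hE, h₁, h₂⟩ := hΓ ((1 - p) * z) p
    have h := hE.map_mul p ((1 - p) * z)
    rw [← h₂, hΓp, zero_mul, zero_add, ← mul_assoc, mul_sub, hp, mul_one, sub_self, zero_mul,
      hE.map_zero] at h
    rw [h₁, ← h]
  have hsplit : Γ x = Γ (p * x) + Γ ((1 - p) * x) := by
    rw [← hΓadd, ← add_mul, add_sub_cancel, one_mul]
  have hΓx : Γ (p * x) = p * Γ x := by rw [hsplit, mul_add, hmul', add_zero, ← hmul]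
  simp only [hΓdef, hD.map_mul] at hΓx
  rw [hDp]
  linear_combination (norm := noncomm_ring) hΓx

include hproj in
theorem map_mul (hΔ : Is2LocalDerivationOn Δ) (x y : A) : Δ (x * y) = Δ x * y + x * Δ y := by
  have hadd := hΔ.map_add hproj
  set δ : A → A → A := fun a b => Δ (a * b) - Δ a * b - a * Δ b with hδ
  have hδdef : ∀ a b, δ a b = Δ (a * b) - Δ a * b - a * Δ b := fun _ _ => rfl
  have hanti : ∀ a b, δ b a = -δ a b := fun a b => by
    have h := hΔ.map_sq (a + b)
    have e : (a + b) * (a + b) = (a * a + b * b) + (a * b + b * a) := by noncomm_ring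
    rw [e, hadd, hadd, hadd (a * b), hadd a b, hΔ.map_sq, hΔ.map_sq] at h
    rw [hδdef, hδdef]
    linear_combination (norm := noncomm_ring) h
  have hcocycle : ∀ a b c, a * δ b c - δ (a * b) c + δ a (b * c) - δ a b * c = 0 := fun a b c => by
    rw [hδdef, hδdef, hδdef, hδdef, mul_assoc a b c]; noncomm_ring
  have hleft : ∀ p, IsStarProjection p → ∀ b, δ p b = 0 := fun p hp b => by
    rw [hδdef, hΔ.map_idempotent_mul hadd hp.isIdempotentElem]; noncomm_ring
  have hright : ∀ p, IsStarProjection p → ∀ b, δ b p = 0 := fun p hp b => by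
    rw [hanti, hleft p hp, neg_zero]
  have hpl : ∀ p, IsStarProjection p → ∀ b c, δ (p * b) c = p * δ b c := fun p hp b c => by
    have h := hcocycle p b c
    rw [hleft p hp, hleft p hp, zero_mul, add_zero, sub_zero, sub_eq_zero] at h
    exact h.symm
  have hpr : ∀ p, IsStarProjection p → ∀ b c, δ b (c * p) = δ b c * p := fun p hp b c => by
    have h := hcocycle b c p
    rw [hright p hp, hright p hp, mul_zero, sub_zero, zero_add, sub_eq_zero] at h
    exact h
  have hpm : ∀ p, IsStarProjection p → ∀ b c, δ (b * p) c = δ b (p * c) := fun p hp b c => by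
    have h := hcocycle b p c
    rw [hleft p hp, hright p hp, mul_zero, zero_mul, sub_zero, zero_sub, neg_add_eq_zero] at h
    exact h
  have hcentral : ∀ b c a, δ b c * a = a * δ b c := fun b c =>
    commute_of_commute_starProjection hproj fun p hp => by
      have h1 : δ b (p * c) = p * δ b c := by rw [hanti, hpl p hp, hanti b c]; simp
      have h2 : δ (b * p) c = δ b c * p := by rw [hanti, hpr p hp, hanti b c]; simp
      rw [← h1, ← hpm p hp, h2]
  have hcomm := mul_commutator_eq_zero_of_starProjection hproj (d := δ x y) fun p hp b => by
    have h := hcentral (p * x) y b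
    rw [hpl p hp] at h
    linear_combination (norm := noncomm_ring) h + hcentral x y p * b - b * hcentral x y p
      - hcentral x y b * p
  have hzero : δ x y = 0 :=
    eq_zero_of_central_of_mul_self_eq_zero (hcentral x y) (by
      have h1 : δ x y * (Δ x * y) = 0 := by
        rw [← mul_assoc, hΔ.mul_map_eq_zero (hcentral x y) hcomm, zero_mul]
      have h2 : δ x y * (x * Δ y) = 0 := by
        rw [← mul_assoc, hcentral, mul_assoc, hΔ.mul_map_eq_zero (hcentral x y) hcomm, mul_zero]
      nth_rw 2 [hδdef]
      rw [mul_sub, mul_sub, h1, h2, hΔ.mul_map_eq_zero (hcentral x y) hcomm]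
      simp)
  rw [hδdef] at hzero
  linear_combination (norm := noncomm_ring) hzero

end Is2LocalDerivationOn

end CStarAlgebra

namespace VonNeumannAlgebra

variable {H : Type*} [NormedAddCommGroup H] [InnerProductSpace ℂ H] [CompleteSpace H]

theorem isClosed (M : VonNeumannAlgebra H) :
    IsClosed (M.toStarSubalgebra : Set (H →L[ℂ] H)) := by
  rw [coe_toStarSubalgebra, ← centralizer_centralizer]
  exact Set.isClosed_centralizer _

/-- Every element of a von Neumann algebra has a range projection in the algebra. -/
theorem exists_range_projection (M : VonNeumannAlgebra H) (k : M.toStarSubalgebra) :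
    ∃ r : M.toStarSubalgebra, IsStarProjection r ∧ r * k = k ∧ ∀ y, y * k = 0 → y * r = 0 := by
  let K : Submodule ℂ H := (k : H →L[ℂ] H).range.topologicalClosure
  have : CompleteSpace K := (Submodule.isClosed_topologicalClosure _).completeSpace_coe
  have hP : IsStarProjection K.starProjection := isStarProjection_starProjection
  have hmem : K.starProjection ∈ M := by
    rw [IsStarProjection.mem_iff hP]
    intro y hy
    rw [Submodule.range_starProjection, Module.End.mem_invtSubmodule]
    have hyk : (k : H →L[ℂ] H) * y = y * k := mem_commutant_iff.1 hy _ k.2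
    refine Submodule.topologicalClosure_minimal _ ?_
      ((Submodule.isClosed_topologicalClosure _).preimage y.continuous)
    rintro _ ⟨v, rfl⟩
    refine Submodule.le_topologicalClosure _ ⟨y v, ?_⟩
    exact congrArg (fun T : H →L[ℂ] H => T v) hyk
  refine ⟨⟨K.starProjection, hmem⟩, ⟨Subtype.ext hP.isIdempotentElem,
    Subtype.ext hP.isSelfAdjoint⟩, Subtype.ext (ContinuousLinearMap.ext fun v => ?_),
    fun y hy => Subtype.ext (ContinuousLinearMap.ext fun v => ?_)⟩
  · exact Submodule.starProjection_eq_self_iff.2 (Submodule.le_topologicalClosure _ ⟨v, rfl⟩)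
  · have hy' : ∀ v, (y : H →L[ℂ] H) ((k : H →L[ℂ] H) v) = 0 := fun v =>
      congrArg (fun T : M.toStarSubalgebra => (T : H →L[ℂ] H) v) hy
    have hle : K ≤ LinearMap.ker ((y : H →L[ℂ] H) : H →ₗ[ℂ] H) :=
      Submodule.topologicalClosure_minimal _ (by rintro _ ⟨v, rfl⟩; exact hy' v)
        (y : H →L[ℂ] H).isClosed_ker
    exact hle (K.starProjection_apply_mem v)

end VonNeumannAlgebra

/-- every 2-local derivation on an arbitrary von Neumann algebra
(a unital *-subalgebra `M` of `B(H)` equal to its double commutant; its underlying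
algebra is the star-subalgebra `M.toStarSubalgebra` of `H →L[ℂ] H`) is a derivation;
in particular it is linear and satisfies the Leibniz rule. -/
theorem twoLocalDerivation_vonNeumannAlgebra_isDerivation
    {H : Type*} [NormedAddCommGroup H] [InnerProductSpace ℂ H] [CompleteSpace H]
    (M : VonNeumannAlgebra H)
    (Δ : M.toStarSubalgebra → M.toStarSubalgebra)
    (hΔ : Is2LocalDerivationOn Δ) :
    IsLinearMap ℂ Δ ∧
      ∀ x y : M.toStarSubalgebra, Δ (x * y) = Δ x * y + x * Δ y := by
  let _ : CStarAlgebra M.toStarSubalgebra :=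
    StarSubalgebra.cstarAlgebra M.toStarSubalgebra (h_closed := M.isClosed)
  have hproj := mem_of_starProjection_mem M.exists_range_projection
  exact ⟨⟨Is2LocalDerivationOn.map_add hproj hΔ, Is2LocalDerivationOn.map_smul hΔ⟩,
    Is2LocalDerivationOn.map_mul hproj hΔ⟩
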